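/- arXiv:2403.18678 — 5 statements merged into one kernel-verified Lean document; each statement's English description precedes it below -/
import Mathlib

section
/- Let X be an infinite-dimensional separable Banach space over 𝕂 ∈ {ℝ, ℂ}. Then the set of supercyclic operators in L(X) is spaceable: there exists an infinite-dimensional closed linear subspace M of L(X) (with the operator norm) such that every nonzero operator T ∈ M is supercyclic. -/
open Filter Topology

/-- A continuous linear operator `U` on a normed space `Y` over `𝕜` is *supercyclic* if
there is a vector `y` whose projective orbit `{c • Uᵏ y : c ∈ 𝕜, k ≥ 0}` is dense in `Y`. -/
def Supercyclic {𝕜 : Type*} [RCLike 𝕜] {Y : Type*} [NormedAddCommGroup Y]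
    [NormedSpace 𝕜 Y] (U : Y →L[𝕜] Y) : Prop :=
  ∃ y : Y, Dense {z : Y | ∃ (c : 𝕜) (k : ℕ), z = c • (U ^ k) y}

/-!
By Gram–Schmidt and Hahn–Banach, `X` has a biorthogonal system with dense span; weighting and
rescaling it gives a bounded operator `N` and a sequence `e` with dense span such that `N e₀ = 0`
and `N eₙ₊₁ = eₙ`. Let `M` consist of the operators which act on the span of `e` as a formal power
series `∑ aₖ Nᵏ` with `a₀ = 0`. The coefficients are recovered by a continuous functional
(`φ eₙ = δₙ₀` gives `aₖ = φ (T eₖ)`), so `M` is closed, and it contains the linearly independent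
operators `N, N², …`. A nonzero `T ∈ M` is locally nilpotent on the span of `e`, because `a₀ = 0`,
and it maps the span onto itself, because a nonzero power series is a power of `N` times a unit.
Baire's theorem makes any operator with dense range and dense generalized kernel supercyclic.
-/

section Universality

variable {Y Z ι : Type*} [TopologicalSpace Y] [TopologicalSpace Z]

theorem exists_denseRange_apply_of_transitive [BaireSpace Y] [Nonempty Y]
    [SecondCountableTopology Z] {F : ι → Y → Z} (hF : ∀ i, Continuous (F i))
    (htrans : ∀ U V, IsOpen U → U.Nonempty → IsOpen V → V.Nonempty →
      ∃ i, (U ∩ F i ⁻¹' V).Nonempty) :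
    ∃ y, DenseRange fun i ↦ F i y := by
  have hbasis := TopologicalSpace.isBasis_countableBasis Z
  have hdense : Dense (⋂ V ∈ TopologicalSpace.countableBasis Z, ⋃ i, F i ⁻¹' V) := by
    refine dense_biInter_of_isOpen
      (fun V hV ↦ isOpen_iUnion fun i ↦ (hbasis.isOpen hV).preimage (hF i))
      (TopologicalSpace.countable_countableBasis Z) fun V hV ↦ ?_
    refine dense_iff_inter_open.2 fun U hU hUne ↦ ?_
    obtain ⟨i, y, hyU, hyV⟩ := htrans U V hU hUne (hbasis.isOpen hV)
      (TopologicalSpace.nonempty_of_mem_countableBasis hV)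
    exact ⟨y, hyU, Set.mem_iUnion.2 ⟨i, hyV⟩⟩
  obtain ⟨y, hy⟩ := hdense.nonempty
  refine ⟨y, hbasis.dense_iff.2 fun V hV _ ↦ ?_⟩
  obtain ⟨i, hi⟩ := Set.mem_iUnion.1 (Set.mem_iInter₂.1 hy V hV)
  exact ⟨F i y, hi, i, rfl⟩

theorem denseRange_iterate {f : Y → Y} (hf : DenseRange f) (hcont : Continuous f) :
    ∀ n, DenseRange f^[n]
  | 0 => Function.surjective_id.denseRange
  | n + 1 => (denseRange_iterate hf hcont n).comp hf (hcont.iterate n)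

end Universality

theorem supercyclic_of_dense_maxGenEigenspace_zero {𝕜 X : Type*} [RCLike 𝕜]
    [NormedAddCommGroup X] [NormedSpace 𝕜 X] [BaireSpace X] [SecondCountableTopology X]
    {T : X →L[𝕜] X} (hrange : DenseRange T)
    (hker : Dense (Module.End.maxGenEigenspace (T : X →ₗ[𝕜] X) 0 : Set X)) :
    Supercyclic T := by
  suffices htrans : ∀ U V : Set X, IsOpen U → U.Nonempty → IsOpen V → V.Nonempty →
      ∃ p : 𝕜 × ℕ, (U ∩ (fun x ↦ p.1 • (T ^ p.2) x) ⁻¹' V).Nonempty by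
    obtain ⟨y, hy⟩ := exists_denseRange_apply_of_transitive
      (fun p : 𝕜 × ℕ ↦ (T ^ p.2).continuous.const_smul p.1) htrans
    refine ⟨y, hy.mono ?_⟩
    rintro _ ⟨⟨c, k⟩, rfl⟩
    exact ⟨c, k, rfl⟩
  intro U V hU hUne hV hVne
  obtain ⟨x, hxU, hx⟩ := hker.inter_open_nonempty U hU hUne
  obtain ⟨n, hn⟩ : ∃ n, (T ^ n) x = 0 := by
    simpa [Module.End.mem_maxGenEigenspace, ← ContinuousLinearMap.toLinearMap_pow] using hx
  obtain ⟨z, hz⟩ : ∃ z, (T ^ n) z ∈ V := by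
    have hpow : DenseRange (T ^ n) := by
      simpa only [FunLike.coe_pow_eq_iterate] using denseRange_iterate hrange T.continuous n
    exact hpow.exists_mem_open hV hVne
  -- `Tⁿ` kills `x` but not its perturbation `x + ε • z`, whose image `ε⁻¹` rescales into `V`.
  obtain ⟨ε, hεU, hε⟩ : ∃ ε : 𝕜, x + ε • z ∈ U ∧ ε ≠ 0 := by
    have hcont : ContinuousAt (fun ε : 𝕜 ↦ x + ε • z) 0 := by fun_prop
    have hnear : ∀ᶠ ε in 𝓝 (0 : 𝕜), x + ε • z ∈ U :=
      hcont.eventually_mem (hU.mem_nhds (by simpa using hxU))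
    have hne : ∀ᶠ ε in 𝓝[≠] (0 : 𝕜), ε ≠ 0 := self_mem_nhdsWithin
    exact ((hnear.filter_mono nhdsWithin_le_nhds).and hne).exists
  refine ⟨(ε⁻¹, n), x + ε • z, hεU, ?_⟩
  rwa [Set.mem_preimage, map_add, hn, zero_add, map_smul, inv_smul_smul₀ hε]

section Biorthogonal

theorem exists_strongDual_apply_eq {R V ι : Type*} [Field R] [TopologicalSpace R]
    [IsTopologicalRing R] [AddCommGroup V] [TopologicalSpace V] [Module R V] [SeparatingDual R V]
    {v : ι → V} (hv : LinearIndependent R v) (s : Finset ι) (c : ι → R) :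
    ∃ f : StrongDual R V, ∀ i ∈ s, f (v i) = c i := by
  have hinj : Function.Injective (Finsupp.linearCombination R fun i : s ↦ v i) :=
    hv.comp _ Subtype.val_injective
  obtain ⟨f, hf⟩ := SeparatingDual.dualMap_surjective_iff.2 hinj
    (Finsupp.linearCombination R fun i : s ↦ c i)
  refine ⟨f, fun i hi ↦ ?_⟩
  simpa using LinearMap.congr_fun hf (Finsupp.single ⟨i, hi⟩ 1)

variable {R V ι : Type*} [CommRing R] [AddCommGroup V] [Module R V]
  [LinearOrder ι] [LocallyFiniteOrderBot ι]

attribute [local instance] IsWellOrder.toHasWellFounded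

/-- The Gram–Schmidt process relative to a family of functionals `f` that is unitriangular on `v`:
it turns `v` into a family biorthogonal to `f`. -/
noncomputable def biorthogonalize [WellFoundedLT ι] (f : ι → Module.Dual R V) (v : ι → V)
    (n : ι) : V :=
  v n - ∑ i : Finset.Iio n, f i (v n) • biorthogonalize f v i
termination_by n
decreasing_by exact Finset.mem_Iio.1 i.2

variable [WellFoundedLT ι]

theorem biorthogonalize_eq (f : ι → Module.Dual R V) (v : ι → V) (n : ι) :
    biorthogonalize f v n = v n - ∑ i ∈ Finset.Iio n, f i (v n) • biorthogonalize f v i := by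
  rw [← Finset.sum_attach, Finset.attach_eq_univ, biorthogonalize]

theorem apply_biorthogonalize {f : ι → Module.Dual R V} {v : ι → V}
    (hone : ∀ i, f i (v i) = 1) (hzero : ∀ i j, j < i → f i (v j) = 0) (i j : ι) :
    f i (biorthogonalize f v j) = if i = j then 1 else 0 := by
  induction j using WellFoundedLT.induction with
  | ind j ih =>
    have hsum : ∑ k ∈ Finset.Iio j, f k (v j) * f i (biorthogonalize f v k) =
        if i < j then f i (v j) else 0 := by
      rw [Finset.sum_congr rfl fun k hk ↦ by rw [ih k (Finset.mem_Iio.1 hk)]]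
      simp
    rw [biorthogonalize_eq, map_sub, map_sum]
    simp only [map_smul, smul_eq_mul, hsum]
    rcases lt_trichotomy i j with hij | rfl | hij
    · simp [hij, hij.ne]
    · simp [hone]
    · simp [hij.not_gt, hij.ne', hzero i j hij]

theorem span_range_le_span_range_biorthogonalize (f : ι → Module.Dual R V) (v : ι → V) :
    Submodule.span R (Set.range v) ≤ Submodule.span R (Set.range (biorthogonalize f v)) := by
  rw [Submodule.span_le]
  rintro _ ⟨n, rfl⟩
  rw [SetLike.mem_coe, ← sub_add_cancel (v n) (∑ i ∈ Finset.Iio n, f i (v n) • _),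
    ← biorthogonalize_eq]
  exact add_mem (Submodule.mem_span_of_mem ⟨n, rfl⟩) (Submodule.sum_mem _ fun i _ ↦
    Submodule.smul_mem _ _ (Submodule.mem_span_of_mem ⟨i, rfl⟩))

end Biorthogonal

section DenseSequence

variable (𝕜 X : Type*) [NontriviallyNormedField 𝕜] [CompleteSpace 𝕜] [AddCommGroup X]
  [TopologicalSpace X] [IsTopologicalAddGroup X] [Module 𝕜 X] [ContinuousSMul 𝕜 X]
  [TopologicalSpace.SeparableSpace X]

theorem exists_linearIndependent_dense_span [T2Space X] (hinf : ¬ FiniteDimensional 𝕜 X) :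
    ∃ v : ℕ → X, LinearIndependent 𝕜 v ∧
      Dense (Submodule.span 𝕜 (Set.range v) : Set X) := by
  obtain ⟨s, hs, hsdense⟩ := TopologicalSpace.exists_countable_dense X
  obtain ⟨b, hbs, hspan, hb⟩ := exists_linearIndependent 𝕜 s
  have hdense : Dense (Submodule.span 𝕜 b : Set X) :=
    hspan ▸ hsdense.mono Submodule.subset_span
  have hbinf : b.Infinite := fun hbfin ↦ hinf <| by
    have := FiniteDimensional.span_of_finite 𝕜 hbfin
    have htop : Submodule.span 𝕜 b = ⊤ := SetLike.coe_injective <| by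
      rw [← (Submodule.closed_of_finiteDimensional _).closure_eq, hdense.closure_eq,
        Submodule.top_coe]
    exact Module.finite_def.2 (htop ▸ Submodule.fg_span hbfin)
  have := (hs.mono hbs).to_subtype
  have := hbinf.to_subtype
  obtain ⟨φ⟩ : Nonempty (ℕ ≃ b) := inferInstance
  refine ⟨fun n ↦ φ n, hb.comp φ φ.injective, ?_⟩
  rwa [← Function.comp_def, φ.surjective.range_comp, Subtype.range_coe]

theorem exists_biorthogonal_dense_span [SeparatingDual 𝕜 X] (hinf : ¬ FiniteDimensional 𝕜 X) :
    ∃ (b : ℕ → X) (f : ℕ → StrongDual 𝕜 X), (∀ i j, f i (b j) = if i = j then 1 else 0) ∧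
      Dense (Submodule.span 𝕜 (Set.range b) : Set X) := by
  have := SeparatingDual.t2Space (R := 𝕜) (V := X)
  obtain ⟨v, hv, hdense⟩ := exists_linearIndependent_dense_span 𝕜 X hinf
  choose f hf using fun n ↦ exists_strongDual_apply_eq hv (Finset.Iic n) (Pi.single n 1)
  refine ⟨biorthogonalize (fun n ↦ (f n : X →ₗ[𝕜] 𝕜)) v, f, apply_biorthogonalize
    (fun i ↦ ?_) (fun i j hji ↦ ?_), hdense.mono (span_range_le_span_range_biorthogonalize _ v)⟩
  · simpa using hf i i (Finset.mem_Iic.2 le_rfl)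
  · simpa [hji.ne] using hf i j (Finset.mem_Iic.2 hji.le)

end DenseSequence

section BackwardShift

/-- The linear operator `N` is the backward shift along the sequence `e`. -/
structure IsBackwardShift {R V : Type*} [Semiring R] [AddCommMonoid V] [Module R V]
    (N : Module.End R V) (e : ℕ → V) : Prop where
  apply_zero : N (e 0) = 0
  apply_succ : ∀ n, N (e (n + 1)) = e n

theorem IsBackwardShift.pow_apply {R V : Type*} [Semiring R] [AddCommMonoid V] [Module R V]
    {N : Module.End R V} {e : ℕ → V} (hN : IsBackwardShift N e) (k n : ℕ) :
    (N ^ k) (e n) = if k ≤ n then e (n - k) else 0 := by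
  induction k generalizing n with
  | zero => simp
  | succ k ih =>
    rw [pow_succ, Module.End.mul_apply]
    cases n with
    | zero => simp [hN.apply_zero]
    | succ n => simp [hN.apply_succ, ih]

theorem exists_ne_zero_summable_smul (𝕜 : Type*) {E ι : Type*} [NontriviallyNormedField 𝕜]
    [SeminormedAddCommGroup E] [NormedSpace 𝕜 E] [CompleteSpace E] [Countable ι] (A : ι → E) :
    ∃ w : ι → 𝕜, (∀ i, w i ≠ 0) ∧ Summable fun i ↦ w i • A i := by
  obtain ⟨ε, hε, _, hsum, -⟩ := NNReal.exists_pos_sum_of_countable one_ne_zero ι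
  have hpos (i : ι) : 0 < (ε i : ℝ) / (1 + ‖A i‖) := div_pos (hε i) (by positivity)
  choose w hw₀ hw using fun i ↦ NormedField.exists_norm_lt 𝕜 (hpos i)
  refine ⟨w, fun i ↦ norm_pos_iff.1 (hw₀ i),
    .of_norm_bounded (NNReal.summable_coe.2 hsum.summable) fun i ↦ ?_⟩
  calc ‖w i • A i‖ ≤ ‖w i‖ * (1 + ‖A i‖) := by
        rw [norm_smul]; gcongr; simp
    _ ≤ ε i := ((lt_div_iff₀ (by positivity)).1 (hw i)).le

variable {𝕜 X : Type*} [NontriviallyNormedField 𝕜] [NormedAddCommGroup X] [NormedSpace 𝕜 X]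
  [CompleteSpace X]

theorem exists_weighted_backwardShift {b : ℕ → X} {f : ℕ → StrongDual 𝕜 X}
    (hfb : ∀ i j, f i (b j) = if i = j then 1 else 0) :
    ∃ (N : X →L[𝕜] X) (w : ℕ → 𝕜), (∀ n, w n ≠ 0) ∧ N (b 0) = 0 ∧
      ∀ n, N (b (n + 1)) = w n • b n := by
  obtain ⟨w, hw, hsum⟩ := exists_ne_zero_summable_smul 𝕜 fun n ↦ (f (n + 1)).smulRight (b n)
  have happly (m : ℕ) : (∑' n, w n • (f (n + 1)).smulRight (b n)) (b m) =
      ∑' n, if n + 1 = m then w n • b n else 0 := by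
    rw [← ContinuousLinearMap.apply_apply (b m), ContinuousLinearMap.map_tsum _ hsum]
    simp [hfb, ite_smul]
  refine ⟨∑' n, w n • (f (n + 1)).smulRight (b n), w, hw, by simp [happly], fun n ↦ ?_⟩
  simp [happly]

theorem exists_isBackwardShift_of_biorthogonal {b : ℕ → X} {f : ℕ → StrongDual 𝕜 X}
    (hfb : ∀ i j, f i (b j) = if i = j then 1 else 0) :
    ∃ (N : X →L[𝕜] X) (c : ℕ → 𝕜), c 0 = 1 ∧ (∀ n, c n ≠ 0) ∧
      IsBackwardShift (N : X →ₗ[𝕜] X) fun n ↦ c n • b n := by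
  obtain ⟨N, w, hw, hzero, hsucc⟩ := exists_weighted_backwardShift hfb
  refine ⟨N, fun n ↦ ∏ i ∈ Finset.range n, (w i)⁻¹, by simp, fun n ↦
    Finset.prod_ne_zero_iff.2 fun i _ ↦ inv_ne_zero (hw i), by simp [hzero], fun n ↦ ?_⟩
  simp only [ContinuousLinearMap.coe_coe, map_smul, hsucc, Finset.prod_range_succ, smul_smul,
    inv_mul_cancel_right₀ (hw n)]

theorem exists_isBackwardShift_dense_span [CompleteSpace 𝕜] [SeparatingDual 𝕜 X]
    [TopologicalSpace.SeparableSpace X] (hinf : ¬ FiniteDimensional 𝕜 X) :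
    ∃ (N : X →L[𝕜] X) (e : ℕ → X) (φ : StrongDual 𝕜 X),
      IsBackwardShift (N : X →ₗ[𝕜] X) e ∧ (∀ n, φ (e n) = if n = 0 then 1 else 0) ∧
      Dense (Submodule.span 𝕜 (Set.range e) : Set X) := by
  obtain ⟨b, f, hfb, hdense⟩ := exists_biorthogonal_dense_span 𝕜 X hinf
  obtain ⟨N, c, hc₀, hc, hN⟩ := exists_isBackwardShift_of_biorthogonal hfb
  refine ⟨N, fun n ↦ c n • b n, f 0, hN, fun n ↦ ?_, hdense.mono ?_⟩
  · rcases eq_or_ne n 0 with rfl | hn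
    · simp [hfb, hc₀]
    · simp [hfb, hn, hn.symm]
  · refine Submodule.span_le.2 (Set.range_subset_iff.2 fun n ↦ ?_)
    exact (Submodule.smul_mem_iff _ (hc n)).1 (Submodule.mem_span_of_mem ⟨n, rfl⟩)

end BackwardShift

section ShiftSymbol

open Finset.HasAntidiagonal (antidiagonal mem_antidiagonal)

/-- The operator `T` acts on the sequence `e` as the formal power series `∑ aₖ Nᵏ` in the backward
shift `N` along `e`, that is `T eₙ = ∑_{i + j = n} aᵢ eⱼ`. -/
def HasShiftSymbol {R V : Type*} [Semiring R] [AddCommMonoid V] [Module R V]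
    (T : Module.End R V) (e : ℕ → V) (a : ℕ → R) : Prop :=
  ∀ n, T (e n) = ∑ p ∈ antidiagonal n, a p.1 • e p.2

theorem IsBackwardShift.hasShiftSymbol_pow {R V : Type*} [Semiring R] [AddCommMonoid V]
    [Module R V] {N : Module.End R V} {e : ℕ → V} (hN : IsBackwardShift N e) (k : ℕ) :
    HasShiftSymbol (N ^ k) e (Pi.single k 1) := by
  intro n
  rw [Finset.Nat.sum_antidiagonal_eq_sum_range_succ
    fun i j ↦ Pi.single (M := fun _ ↦ R) k 1 i • e j]
  simp [hN.pow_apply, Pi.single_apply, ite_smul]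

namespace HasShiftSymbol

section CommRing

variable {R V : Type*} [CommRing R] [AddCommGroup V] [Module R V] {T : Module.End R V}
  {e : ℕ → V} {a : ℕ → R}

theorem dual_apply (hT : HasShiftSymbol T e a) {φ : Module.Dual R V}
    (hφ : ∀ n, φ (e n) = if n = 0 then 1 else 0) (n : ℕ) : φ (T (e n)) = a n := by
  rw [hT n, map_sum, Finset.sum_eq_single (n, 0)]
  · simp [hφ]
  · rintro ⟨i, j⟩ hij hne
    have hj : j ≠ 0 := by
      rintro rfl
      simp_all
    simp [hφ, hj]
  · simp

theorem span_range_le_maxGenEigenspace_zero (hT : HasShiftSymbol T e a) (ha : a 0 = 0) :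
    Submodule.span R (Set.range e) ≤ T.maxGenEigenspace 0 := by
  have hcomap {x : V} (hx : T x ∈ T.maxGenEigenspace 0) : x ∈ T.maxGenEigenspace 0 := by
    simp only [Module.End.mem_maxGenEigenspace, zero_smul, sub_zero] at hx ⊢
    obtain ⟨k, hk⟩ := hx
    exact ⟨k + 1, by rwa [pow_succ, Module.End.mul_apply]⟩
  refine Submodule.span_le.2 (Set.range_subset_iff.2 fun n ↦ ?_)
  induction n using Nat.strong_induction_on with
  | h n ih =>
    refine hcomap (hT n ▸ Submodule.sum_mem _ ?_)
    rintro ⟨i, j⟩ hij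
    rw [mem_antidiagonal] at hij
    rcases eq_or_ne i 0 with rfl | hi
    · simp [ha]
    · exact Submodule.smul_mem _ _ (ih j (by lia))

end CommRing

theorem span_range_le_range {K V : Type*} [Field K] [AddCommGroup V] [Module K V]
    {T : Module.End K V} {e : ℕ → V} {a : ℕ → K} (hT : HasShiftSymbol T e a) (ha : a ≠ 0) :
    Submodule.span K (Set.range e) ≤ LinearMap.range T := by
  classical
  have hne : ∃ m, a m ≠ 0 := Function.ne_iff.1 ha
  obtain ⟨m, hm, hmin⟩ : ∃ m, a m ≠ 0 ∧ ∀ i < m, a i = 0 :=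
    ⟨Nat.find hne, Nat.find_spec hne, fun i hi ↦ not_not.1 (Nat.find_min hne hi)⟩
  refine Submodule.span_le.2 (Set.range_subset_iff.2 fun n ↦ ?_)
  induction n using Nat.strong_induction_on with
  | h n ih =>
    have hlower : ∑ p ∈ (antidiagonal (m + n)).erase (m, n), a p.1 • e p.2 ∈
        LinearMap.range T := by
      refine Submodule.sum_mem _ ?_
      rintro ⟨i, j⟩ hij
      simp only [Finset.mem_erase, mem_antidiagonal, ne_eq, Prod.mk.injEq] at hij
      rcases lt_or_ge i m with hi | hi
      · simp [hmin i hi]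
      · exact Submodule.smul_mem _ _ (ih j (by lia))
    have hlead : a m • e n + ∑ p ∈ (antidiagonal (m + n)).erase (m, n), a p.1 • e p.2 =
        T (e (m + n)) := by
      rw [hT]
      exact Finset.add_sum_erase (a := (m, n)) _ (fun p : ℕ × ℕ ↦ a p.1 • e p.2)
        (mem_antidiagonal.2 rfl)
    rw [SetLike.mem_coe, ← Submodule.smul_mem_iff _ hm, ← Submodule.add_mem_iff_left _ hlower,
      hlead]
    exact LinearMap.mem_range_self T _

end HasShiftSymbol

end ShiftSymbol

section ShiftOperators

open Finset.HasAntidiagonal (antidiagonal)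

variable {𝕜 X : Type*} [NontriviallyNormedField 𝕜] [NormedAddCommGroup X] [NormedSpace 𝕜 X]

/-- The bounded operators acting on `e` as a formal power series without constant term in the
backward shift along `e`. -/
def shiftSeriesOperators (𝕜 : Type*) {X : Type*} [NontriviallyNormedField 𝕜]
    [NormedAddCommGroup X] [NormedSpace 𝕜 X] (e : ℕ → X) : Submodule 𝕜 (X →L[𝕜] X) where
  carrier := {T | ∃ a : ℕ → 𝕜, a 0 = 0 ∧ HasShiftSymbol (T : X →ₗ[𝕜] X) e a}
  zero_mem' := ⟨0, rfl, fun n ↦ by simp⟩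
  add_mem' := by
    rintro S T ⟨a, ha, hS⟩ ⟨b, hb, hT⟩
    exact ⟨a + b, by simp [ha, hb], fun n ↦ by simp [hS n, hT n, add_smul, Finset.sum_add_distrib]⟩
  smul_mem' := by
    rintro c T ⟨a, ha, hT⟩
    exact ⟨c • a, by simp [ha], fun n ↦ by simp [hT n, smul_smul, Finset.smul_sum]⟩

variable {e : ℕ → X} {φ : StrongDual 𝕜 X}

theorem mem_shiftSeriesOperators_iff (hφ : ∀ n, φ (e n) = if n = 0 then 1 else 0)
    {T : X →L[𝕜] X} :
    T ∈ shiftSeriesOperators 𝕜 e ↔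
      φ (T (e 0)) = 0 ∧ HasShiftSymbol (T : X →ₗ[𝕜] X) e fun n ↦ φ (T (e n)) := by
  refine ⟨?_, fun hT ↦ ⟨fun n ↦ φ (T (e n)), hT⟩⟩
  rintro ⟨a, ha, hT⟩
  obtain rfl : (fun n ↦ φ (T (e n))) = a :=
    funext (hT.dual_apply (φ := (φ : X →ₗ[𝕜] 𝕜)) hφ)
  exact ⟨ha, hT⟩

theorem isClosed_shiftSeriesOperators (hφ : ∀ n, φ (e n) = if n = 0 then 1 else 0) :
    IsClosed (shiftSeriesOperators 𝕜 e : Set (X →L[𝕜] X)) := by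
  have hset : (shiftSeriesOperators 𝕜 e : Set (X →L[𝕜] X)) = {T | φ (T (e 0)) = 0} ∩
      ⋂ n, {T | T (e n) = ∑ p ∈ antidiagonal n, φ (T (e p.1)) • e p.2} := by
    ext T
    simp [mem_shiftSeriesOperators_iff hφ, HasShiftSymbol]
  rw [hset]
  exact (isClosed_eq (by fun_prop) (by fun_prop)).inter
    (isClosed_iInter fun n ↦ isClosed_eq (by fun_prop) (by fun_prop))

theorem not_finiteDimensional_shiftSeriesOperators
    (hφ : ∀ n, φ (e n) = if n = 0 then 1 else 0) {N : X →L[𝕜] X}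
    (hN : IsBackwardShift (N : X →ₗ[𝕜] X) e) :
    ¬ FiniteDimensional 𝕜 (shiftSeriesOperators 𝕜 e) := by
  have hsymbol (k : ℕ) :
      HasShiftSymbol ((N ^ (k + 1) : X →L[𝕜] X) : X →ₗ[𝕜] X) e (Pi.single (k + 1) 1) := by
    rw [ContinuousLinearMap.toLinearMap_pow]
    exact hN.hasShiftSymbol_pow (k + 1)
  let powers (k : ℕ) : shiftSeriesOperators 𝕜 e := ⟨N ^ (k + 1), _, by simp, hsymbol k⟩
  let coeff (k : ℕ) : Module.Dual 𝕜 (shiftSeriesOperators 𝕜 e) :=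
    φ ∘ₗ (ContinuousLinearMap.apply 𝕜 X (e (k + 1)) : (X →L[𝕜] X) →ₗ[𝕜] X) ∘ₗ
      (shiftSeriesOperators 𝕜 e).subtype
  have hcoeff (i j : ℕ) : coeff i (powers j) = Pi.single (M := fun _ ↦ 𝕜) (j + 1) 1 (i + 1) :=
    (hsymbol j).dual_apply (φ := (φ : X →ₗ[𝕜] 𝕜)) hφ (i + 1)
  intro hfin
  refine Module.Finite.not_linearIndependent_of_infinite powers
    (.of_pairwise_dual_eq_zero_one powers coeff (fun i j hij ↦ ?_) fun i ↦ ?_)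
  · simp [hcoeff, hij]
  · simp [hcoeff]

end ShiftOperators

theorem supercyclic_of_mem_shiftSeriesOperators {𝕜 X : Type*} [RCLike 𝕜] [NormedAddCommGroup X]
    [NormedSpace 𝕜 X] [BaireSpace X] [SecondCountableTopology X] {e : ℕ → X}
    (hdense : Dense (Submodule.span 𝕜 (Set.range e) : Set X)) {T : X →L[𝕜] X}
    (hT : T ∈ shiftSeriesOperators 𝕜 e) (hT₀ : T ≠ 0) : Supercyclic T := by
  obtain ⟨a, ha₀, hTa⟩ := hT
  have ha : a ≠ 0 := by
    rintro rfl
    refine hT₀ (ContinuousLinearMap.ext_on hdense ?_)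
    rintro _ ⟨n, rfl⟩
    simpa using hTa n
  exact supercyclic_of_dense_maxGenEigenspace_zero (hdense.mono (hTa.span_range_le_range ha))
    (hdense.mono (hTa.span_range_le_maxGenEigenspace_zero ha₀))

/-- On any infinite-dimensional separable Banach space `X` over `𝕜 ∈ {ℝ, ℂ}`,
the set of supercyclic operators in `L(X)` is spaceable: there is an infinite-dimensional
closed linear subspace `M` of `L(X)` all of whose nonzero members are supercyclic. -/
theorem supercyclic_operators_spaceable
    {𝕜 : Type*} [RCLike 𝕜] {X : Type*} [NormedAddCommGroup X] [NormedSpace 𝕜 X]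
    [CompleteSpace X] [TopologicalSpace.SeparableSpace X]
    (hinf : ¬ FiniteDimensional 𝕜 X) :
    ∃ M : Submodule 𝕜 (X →L[𝕜] X),
      IsClosed (M : Set (X →L[𝕜] X)) ∧
      ¬ FiniteDimensional 𝕜 M ∧
      ∀ T ∈ M, T ≠ 0 → Supercyclic T := by
  obtain ⟨N, e, φ, hN, hφ, hdense⟩ := exists_isBackwardShift_dense_span (𝕜 := 𝕜) hinf
  have : SecondCountableTopology X := UniformSpace.secondCountable_of_separable X
  exact ⟨shiftSeriesOperators 𝕜 e, isClosed_shiftSeriesOperators hφ,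
    not_finiteDimensional_shiftSeriesOperators hφ hN,
    fun _ hT hT₀ ↦ supercyclic_of_mem_shiftSeriesOperators hdense hT hT₀⟩
end

section
/- Let ℓ¹ be the Banach space of absolutely summable 𝕂-valued sequences, 𝕂 ∈ {ℝ, ℂ}. There exists a linear isometry J : ℓ¹ → L(ℓ¹) whose range is closed and such that every nonzero operator in the range of J is supercyclic. In particular, the set of supercyclic operators in L(ℓ¹), together with the null operator, contains an isometric copy of ℓ¹. -/
open Filter Topology
open scoped ENNReal

instance : Fact ((1 : ℝ≥0∞) ≤ 1) := ⟨le_rfl⟩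

/-!
Send `f ∈ ℓ¹` to the operator `J f = ∑ₙ fₙ Bⁿ⁺¹`, where `B` is the backward shift. Since `B` is a
contraction, `‖J f‖ ≤ ‖f‖`; since `J f` maps the basis vector `eₖ` to
`f₀ eₖ₋₁ + f₁ eₖ₋₂ + ⋯ + fₖ₋₁ e₀`, whose norm is `|f₀| + ⋯ + |fₖ₋₁|`, equality holds.

The same formula shows that `J f` is locally nilpotent on finitely supported sequences and, if
`f ≠ 0`, that its range contains every `eₖ`: with `m` the first index such that `fₘ ≠ 0`, the
leading term of `J f eₖ₊ₘ₊₁` is `fₘ eₖ`. An operator `U` on a separable Banach space with dense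
range and dense generalized kernel is supercyclic by Baire's theorem: if `Uᴺ x = 0` and `Uᴺ z`
lies in a given open set, then so does `t⁻¹ Uᴺ (x + t z)`, while `x + t z` is as close to `x` as
desired.
-/

open scoped lp

theorem denseRange_iterate_s1 {X : Type*} [TopologicalSpace X] {f : X → X} (hf : DenseRange f)
    (hc : Continuous f) (n : ℕ) : DenseRange f^[n] := by
  induction n with
  | zero => exact denseRange_id
  | succ n ih => exact ih.comp hf (hc.iterate n)

theorem exists_denseRange_of_forall_dense_iUnion_preimage {ι X Z : Type*} [TopologicalSpace X]
    [BaireSpace X] [Nonempty X] [TopologicalSpace Z] [SecondCountableTopology Z]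
    {T : ι → X → Z} (hT : ∀ i, Continuous (T i))
    (hdense : ∀ V : Set Z, IsOpen V → V.Nonempty → Dense (⋃ i, T i ⁻¹' V)) :
    ∃ x, DenseRange fun i => T i x := by
  have hbasis := TopologicalSpace.isBasis_countableBasis Z
  have hinter : Dense (⋂ V ∈ TopologicalSpace.countableBasis Z, ⋃ i, T i ⁻¹' V) :=
    dense_biInter_of_isOpen
      (fun V hV => isOpen_iUnion fun i => (hbasis.isOpen hV).preimage (hT i))
      (TopologicalSpace.countable_countableBasis Z)
      (fun V hV => hdense V (hbasis.isOpen hV)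
        (TopologicalSpace.nonempty_of_mem_countableBasis hV))
  obtain ⟨x, hx⟩ := hinter.nonempty
  refine ⟨x, hbasis.dense_iff.2 fun V hV _ => ?_⟩
  obtain ⟨i, hi⟩ := Set.mem_iUnion.1 (Set.mem_iInter₂.1 hx V hV)
  exact ⟨T i x, hi, i, rfl⟩

theorem mem_maxGenEigenspace_zero_of_apply_mem {R M : Type*} [CommRing R] [AddCommGroup M]
    [Module R M] {T : Module.End R M} {x : M} (hx : T x ∈ T.maxGenEigenspace 0) :
    x ∈ T.maxGenEigenspace 0 := by
  simp only [Module.End.mem_maxGenEigenspace, zero_smul, sub_zero] at hx ⊢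
  obtain ⟨k, hk⟩ := hx
  exact ⟨k + 1, hk⟩

theorem exists_mem_smul_pow_mem_of_pow_apply_eq_zero {𝕜 Y : Type*} [NontriviallyNormedField 𝕜]
    [AddCommGroup Y] [TopologicalSpace Y] [ContinuousAdd Y] [Module 𝕜 Y] [ContinuousSMul 𝕜 Y]
    {U : Y →L[𝕜] Y} (hrange : DenseRange U) {V W : Set Y} (hV : IsOpen V) (hVne : V.Nonempty)
    (hW : IsOpen W) {x : Y} (hx : x ∈ W) {N : ℕ} (hN : (U ^ N) x = 0) :
    ∃ y ∈ W, ∃ c : 𝕜, c • (U ^ N) y ∈ V := by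
  have hrangeN : DenseRange (U ^ N) := by
    simpa only [FunLike.coe_pow_eq_iterate] using denseRange_iterate_s1 hrange U.continuous N
  obtain ⟨z, hz⟩ := hrangeN.exists_mem_open hV hVne
  have hlim : Tendsto (fun t : 𝕜 => x + t • z) (𝓝[≠] 0) (𝓝 x) := by
    have hcont : Continuous fun t : 𝕜 => x + t • z := by fun_prop
    simpa using (hcont.tendsto 0).mono_left nhdsWithin_le_nhds
  obtain ⟨t, htW, ht⟩ := ((hlim.eventually_mem (hW.mem_nhds hx)).and self_mem_nhdsWithin).exists
  refine ⟨x + t • z, htW, t⁻¹, ?_⟩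
  rwa [map_add, hN, zero_add, map_smul, inv_smul_smul₀ ht]

theorem Supercyclic.of_denseRange_of_dense_maxGenEigenspace_zero {𝕜 Y : Type*} [RCLike 𝕜]
    [NormedAddCommGroup Y] [NormedSpace 𝕜 Y] [BaireSpace Y] [TopologicalSpace.SeparableSpace Y]
    {U : Y →L[𝕜] Y} (hrange : DenseRange U)
    (hker : Dense (Module.End.maxGenEigenspace (U : Y →ₗ[𝕜] Y) 0 : Set Y)) : Supercyclic U := by
  have := UniformSpace.secondCountable_of_separable Y
  obtain ⟨y, hy⟩ := exists_denseRange_of_forall_dense_iUnion_preimage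
    (T := fun (i : 𝕜 × ℕ) (x : Y) => i.1 • (U ^ i.2) x) (fun i => by fun_prop) fun V hV hVne => by
      refine dense_iff_inter_open.2 fun W hW hWne => ?_
      obtain ⟨x, hx, hxW⟩ := hker.exists_mem_open hW hWne
      obtain ⟨N, hN⟩ : ∃ N, (U ^ N) x = 0 := by
        simpa [Module.End.mem_maxGenEigenspace, ← ContinuousLinearMap.toLinearMap_pow] using hx
      obtain ⟨y, hyW, c, hcV⟩ :=
        exists_mem_smul_pow_mem_of_pow_apply_eq_zero hrange hV hVne hW hxW hN
      exact ⟨y, hyW, Set.mem_iUnion.2 ⟨(c, N), hcV⟩⟩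
  refine ⟨y, hy.mono ?_⟩
  rintro _ ⟨⟨c, k⟩, rfl⟩
  exact ⟨c, k, rfl⟩

section Lp

variable {ι : Type*} {E : ι → Type*} [∀ i, NormedAddCommGroup (E i)] {p : ℝ≥0∞} [Fact (1 ≤ p)]

theorem dense_of_forall_lp_single_mem [DecidableEq ι] (hp : p ≠ ∞) {σ : Type*}
    [SetLike σ (lp E p)] [AddSubmonoidClass σ (lp E p)] {S : σ}
    (hS : ∀ i a, lp.single p i a ∈ S) : Dense (S : Set (lp E p)) := fun x =>
  mem_closure_of_tendsto (lp.hasSum_single hp x)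
    (Eventually.of_forall fun _ => sum_mem fun i _ => hS i (x i))

theorem separableSpace_lp [Countable ι] [∀ i, TopologicalSpace.SeparableSpace (E i)]
    (hp : p ≠ ∞) : TopologicalSpace.SeparableSpace (lp E p) := by
  classical
  let finiteSum (s : Finset ι) (a : ∀ i : s, E i) : lp E p := ∑ i, lp.single p i.1 (a i)
  have hcont (s : Finset ι) : Continuous (finiteSum s) :=
    continuous_finsetSum _ fun i _ => (lp.isometry_single i.1).continuous.comp (continuous_apply i)
  have hdense : Dense (⋃ s, Set.range (finiteSum s)) := fun x =>
    mem_closure_of_tendsto (lp.hasSum_single hp x) (Eventually.of_forall fun s =>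
      Set.mem_iUnion.2 ⟨s, fun i => x i, s.sum_coe_sort fun i => lp.single p i (x i)⟩)
  have hsep : TopologicalSpace.IsSeparable (⋃ s, Set.range (finiteSum s)) :=
    .iUnion fun s => TopologicalSpace.isSeparable_range (hcont s)
  rw [← TopologicalSpace.isSeparable_univ_iff, ← hdense.closure_eq]
  exact hsep.closure

end Lp

noncomputable section PowerSeries

variable {𝕜 A : Type*} [NontriviallyNormedField 𝕜] [NormedRing A] [NormedAlgebra 𝕜 A]
  {a : A}

theorem norm_toSpanSingleton_pow_succ_le_one (ha : ‖a‖ ≤ 1) (n : ℕ) :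
    ‖ContinuousLinearMap.toSpanSingleton 𝕜 (a ^ (n + 1))‖ ≤ 1 := by
  rw [ContinuousLinearMap.norm_toSpanSingleton]
  exact (norm_pow_le' a n.succ_pos).trans (pow_le_one₀ (norm_nonneg a) ha)

variable [CompleteSpace A]

variable (𝕜) in
/-- The power series calculus of a contraction `a` in a Banach algebra: the map
`f ↦ ∑' n, f n • a ^ (n + 1)` on `ℓ¹`. The coefficient of `a ^ (n + 1)` is `f n`, so the series
have no constant term. -/
def powerSeriesEval (a : A) (ha : ‖a‖ ≤ 1) : ℓ¹(ℕ, 𝕜) →L[𝕜] A :=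
  lp.tsumCLM 𝕜 ℕ A ∘L lp.mapCLM 1
    (fun n => ContinuousLinearMap.toSpanSingleton 𝕜 (a ^ (n + 1))) zero_le_one
    (norm_toSpanSingleton_pow_succ_le_one ha)

theorem hasSum_powerSeriesEval (ha : ‖a‖ ≤ 1) (f : ℓ¹(ℕ, 𝕜)) :
    HasSum (fun n => f n • a ^ (n + 1)) (powerSeriesEval 𝕜 a ha f) := by
  let terms : ℓ¹(ℕ, A) :=
    lp.mapCLM 1 (fun n => ContinuousLinearMap.toSpanSingleton 𝕜 (a ^ (n + 1))) zero_le_one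
      (norm_toSpanSingleton_pow_succ_le_one ha) f
  have hsum : HasSum (fun n => terms n) (∑' n, terms n) :=
    (lp.memℓp terms).summable_of_one.hasSum
  exact hsum

theorem hasSum_powerSeriesEval_apply {Y : Type*} [NormedAddCommGroup Y] [NormedSpace 𝕜 Y]
    [CompleteSpace Y] {T : Y →L[𝕜] Y} (hT : ‖T‖ ≤ 1) (f : ℓ¹(ℕ, 𝕜)) (x : Y) :
    HasSum (fun n => f n • (T ^ (n + 1)) x) (powerSeriesEval 𝕜 T hT f x) := by
  simpa only [ContinuousLinearMap.apply_apply, smul_apply] using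
    (ContinuousLinearMap.apply 𝕜 Y x).hasSum (hasSum_powerSeriesEval hT f)

theorem norm_powerSeriesEval_le_one (ha : ‖a‖ ≤ 1) : ‖powerSeriesEval 𝕜 a ha‖ ≤ 1 := by
  grw [powerSeriesEval, ContinuousLinearMap.opNorm_comp_le, lp.norm_tsumCLM_le,
    lp.norm_mapCLM_le, one_mul]

end PowerSeries

noncomputable section BackwardShift

variable {𝕜 E : Type*} [NontriviallyNormedField 𝕜] [NormedAddCommGroup E] [NormedSpace 𝕜 E]
  {p : ℝ≥0∞}

theorem memℓp_comp_succ {x : ℕ → E} (hx : Memℓp x p) : Memℓp (fun n => x (n + 1)) p := by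
  obtain rfl | rfl | hp := p.trichotomy
  · exact memℓp_zero (hx.finite_dsupport.preimage (add_left_injective 1).injOn)
  · exact memℓp_infty (hx.bddAbove.mono (Set.range_comp_subset_range (· + 1) fun n => ‖x n‖))
  · exact memℓp_gen ((summable_nat_add_iff 1).2 (hx.summable hp))

variable [Fact (1 ≤ p)]

theorem norm_lp_comp_succ_le (x : ℓ^p(ℕ, E)) :
    ‖(⟨fun n => x (n + 1), memℓp_comp_succ (lp.memℓp x)⟩ : ℓ^p(ℕ, E))‖ ≤ ‖x‖ := by
  obtain rfl | hp := p.dichotomy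
  · exact lp.norm_le_of_forall_le (norm_nonneg x)
      fun n => lp.norm_apply_le_norm ENNReal.top_ne_zero x (n + 1)
  · have hp₀ : 0 < p.toReal := zero_lt_one.trans_le hp
    refine lp.norm_le_of_forall_sum_le hp₀ (norm_nonneg x) fun s => ?_
    simpa only [Finset.sum_map, addRightEmbedding_apply] using
      lp.sum_rpow_le_norm_rpow hp₀ x (s.map (addRightEmbedding 1))

variable (𝕜 E p) in
/-- The backward shift `(x₀, x₁, x₂, …) ↦ (x₁, x₂, x₃, …)` on `ℓᵖ(ℕ, E)`. -/
def backwardShift : ℓ^p(ℕ, E) →L[𝕜] ℓ^p(ℕ, E) :=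
  LinearMap.mkContinuous
    { toFun x := ⟨fun n => x (n + 1), memℓp_comp_succ (lp.memℓp x)⟩
      map_add' _ _ := rfl
      map_smul' _ _ := rfl }
    1 fun x => (norm_lp_comp_succ_le x).trans_eq (one_mul _).symm

theorem norm_backwardShift_le_one : ‖backwardShift 𝕜 E p‖ ≤ 1 :=
  LinearMap.mkContinuous_norm_le _ zero_le_one _

theorem backwardShift_pow_apply (m : ℕ) (x : ℓ^p(ℕ, E)) (n : ℕ) :
    (backwardShift 𝕜 E p ^ m) x n = x (n + m) := by
  induction m generalizing x with
  | zero => rfl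
  | succ _ ih => exact ih _

theorem backwardShift_pow_single (m k : ℕ) (v : E) :
    (backwardShift 𝕜 E p ^ m) (lp.single p k v) = if m ≤ k then lp.single p (k - m) v else 0 := by
  ext n
  rw [backwardShift_pow_apply]
  split_ifs with h
  · simp only [lp.single_apply, Pi.single_apply, eq_tsub_iff_add_eq_of_le h]
  · exact lp.single_apply_ne (E := fun _ => E) p k v (by lia)

variable [CompleteSpace E]

variable (𝕜 E p) in
/-- The operator `∑' n, f n • Bⁿ⁺¹` on `ℓᵖ(ℕ, E)`, where `B` is the backward shift, as a function
of the coefficient sequence `f ∈ ℓ¹`. -/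
def shiftSeries : ℓ¹(ℕ, 𝕜) →L[𝕜] ℓ^p(ℕ, E) →L[𝕜] ℓ^p(ℕ, E) :=
  powerSeriesEval 𝕜 (backwardShift 𝕜 E p) norm_backwardShift_le_one

theorem hasSum_shiftSeries_apply (f : ℓ¹(ℕ, 𝕜)) (x : ℓ^p(ℕ, E)) :
    HasSum (fun n => f n • (backwardShift 𝕜 E p ^ (n + 1)) x) (shiftSeries 𝕜 E p f x) :=
  hasSum_powerSeriesEval_apply _ f x

theorem norm_shiftSeries_le (f : ℓ¹(ℕ, 𝕜)) : ‖shiftSeries 𝕜 E p f‖ ≤ ‖f‖ :=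
  one_mul ‖f‖ ▸ ContinuousLinearMap.le_of_opNorm_le _
    (norm_powerSeriesEval_le_one (a := backwardShift 𝕜 E p) norm_backwardShift_le_one) f

theorem shiftSeries_single (f : ℓ¹(ℕ, 𝕜)) (k : ℕ) (v : E) :
    shiftSeries 𝕜 E p f (lp.single p k v) =
      ∑ j ∈ Finset.range k, f (k - 1 - j) • lp.single (E := fun _ => E) p j v := by
  rw [← (hasSum_shiftSeries_apply f _).tsum_eq, tsum_eq_sum (s := Finset.range k),
    ← Finset.sum_range_reflect]
  · refine Finset.sum_congr rfl fun j hj => ?_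
    have hj : j < k := Finset.mem_range.1 hj
    rw [backwardShift_pow_single, if_pos (by lia), show k - (k - 1 - j + 1) = j by lia]
  · intro n hn
    rw [backwardShift_pow_single, if_neg (by simpa [Nat.lt_succ_iff] using hn), smul_zero]

theorem norm_shiftSeries_single (f : ℓ¹(ℕ, 𝕜)) (k : ℕ) (v : E) :
    ‖shiftSeries 𝕜 E 1 f (lp.single (E := fun _ => E) 1 k v)‖ =
      (∑ n ∈ Finset.range k, ‖f n‖) * ‖v‖ := by
  have hnorm := lp.norm_sum_single (E := fun _ : ℕ => E) (p := 1) (by simp)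
    (fun j => f (k - 1 - j) • v) (Finset.range k)
  simp only [ENNReal.toReal_one, Real.rpow_one, norm_smul, lp.single_smul] at hnorm
  rw [shiftSeries_single, hnorm, ← Finset.sum_mul, Finset.sum_range_reflect fun n => ‖f n‖]

theorem sum_range_norm_le_norm_shiftSeries [Nontrivial E] (f : ℓ¹(ℕ, 𝕜)) (k : ℕ) :
    ∑ n ∈ Finset.range k, ‖f n‖ ≤ ‖shiftSeries 𝕜 E 1 f‖ := by
  obtain ⟨v, hv⟩ := exists_ne (0 : E)
  refine le_of_mul_le_mul_right ?_ (norm_pos_iff.2 hv)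
  calc (∑ n ∈ Finset.range k, ‖f n‖) * ‖v‖
      = ‖shiftSeries 𝕜 E 1 f (lp.single (E := fun _ => E) 1 k v)‖ :=
        (norm_shiftSeries_single f k v).symm
    _ ≤ ‖shiftSeries 𝕜 E 1 f‖ * ‖lp.single (E := fun _ => E) 1 k v‖ :=
        ContinuousLinearMap.le_opNorm _ _
    _ = ‖shiftSeries 𝕜 E 1 f‖ * ‖v‖ := by rw [lp.norm_single zero_lt_one]

theorem norm_shiftSeries [Nontrivial E] (f : ℓ¹(ℕ, 𝕜)) : ‖shiftSeries 𝕜 E 1 f‖ = ‖f‖ := by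
  refine (norm_shiftSeries_le f).antisymm ?_
  refine lp.norm_le_of_forall_sum_le (by simp) (norm_nonneg _) fun s => ?_
  simp only [ENNReal.toReal_one, Real.rpow_one]
  obtain ⟨k, hk⟩ := s.exists_nat_subset_range
  calc ∑ n ∈ s, ‖f n‖
      ≤ ∑ n ∈ Finset.range k, ‖f n‖ := by gcongr
    _ ≤ ‖shiftSeries 𝕜 E 1 f‖ := sum_range_norm_le_norm_shiftSeries f k

theorem single_mem_maxGenEigenspace_shiftSeries (f : ℓ¹(ℕ, 𝕜)) (k : ℕ) (v : E) :
    lp.single p k v ∈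
      Module.End.maxGenEigenspace (shiftSeries 𝕜 E p f : ℓ^p(ℕ, E) →ₗ[𝕜] ℓ^p(ℕ, E)) 0 := by
  induction k using Nat.strong_induction_on with
  | _ k ih =>
    apply mem_maxGenEigenspace_zero_of_apply_mem
    rw [ContinuousLinearMap.coe_coe, shiftSeries_single]
    exact sum_mem fun j hj => Submodule.smul_mem _ _ (ih j (Finset.mem_range.1 hj))

theorem shiftSeries_single_add_succ {f : ℓ¹(ℕ, 𝕜)} {m : ℕ} (hm : ∀ i < m, f i = 0) (k : ℕ)
    (v : E) :
    shiftSeries 𝕜 E p f (lp.single p (k + m + 1) v) =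
      ∑ j ∈ Finset.range k, f (k + m - j) • lp.single (E := fun _ => E) p j v +
        f m • lp.single p k v := by
  have hvanish : ∀ j ∈ Finset.range (k + m + 1), j ∉ Finset.range (k + 1) →
      f (k + m - j) • lp.single (E := fun _ => E) p j v = 0 := fun j _ hj => by
    rw [hm _ (by grind), zero_smul]
  rw [shiftSeries_single, Nat.add_sub_cancel, ← Finset.sum_subset (by simp) hvanish,
    Finset.sum_range_succ, Nat.add_sub_cancel_left]

theorem single_mem_range_shiftSeries {f : ℓ¹(ℕ, 𝕜)} (hf : f ≠ 0) (k : ℕ) (v : E) :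
    lp.single p k v ∈ (shiftSeries 𝕜 E p f).range := by
  classical
  have hne : ∃ n, f n ≠ 0 := by
    by_contra! h
    exact hf (lp.ext (funext h))
  obtain ⟨m, hm, hmin⟩ : ∃ m, f m ≠ 0 ∧ ∀ i < m, f i = 0 :=
    ⟨Nat.find hne, Nat.find_spec hne, fun i hi => not_not.1 (Nat.find_min hne hi)⟩
  induction k using Nat.strong_induction_on generalizing v with
  | _ k ih =>
    have hlead := shiftSeries_single_add_succ (p := p) hmin k v
    have hlower : ∑ j ∈ Finset.range k, f (k + m - j) • lp.single (E := fun _ => E) p j v ∈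
        (shiftSeries 𝕜 E p f).range :=
      sum_mem fun j hj => Submodule.smul_mem _ _ (ih j (Finset.mem_range.1 hj) v)
    have hmem : f m • lp.single p k v ∈ (shiftSeries 𝕜 E p f).range :=
      (Submodule.add_mem_iff_right _ hlower).1 (hlead ▸ ⟨_, rfl⟩)
    exact (Submodule.smul_mem_iff _ hm).1 hmem

end BackwardShift

section ShiftSeries

variable {𝕜 E : Type*} [RCLike 𝕜] [NormedAddCommGroup E] [NormedSpace 𝕜 E] [CompleteSpace E]

theorem supercyclic_shiftSeries [TopologicalSpace.SeparableSpace E] {p : ℝ≥0∞} [Fact (1 ≤ p)]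
    (hp : p ≠ ∞) {f : ℓ¹(ℕ, 𝕜)} (hf : f ≠ 0) : Supercyclic (shiftSeries 𝕜 E p f) := by
  have := separableSpace_lp (E := fun _ : ℕ => E) hp
  exact .of_denseRange_of_dense_maxGenEigenspace_zero
    (dense_of_forall_lp_single_mem hp (single_mem_range_shiftSeries hf))
    (dense_of_forall_lp_single_mem hp (single_mem_maxGenEigenspace_shiftSeries f))

theorem supercyclic_contains_isometric_copy_of_l1_general [Nontrivial E]
    [TopologicalSpace.SeparableSpace E] :
    ∃ J : ℓ¹(ℕ, 𝕜) →ₗᵢ[𝕜] (ℓ¹(ℕ, E) →L[𝕜] ℓ¹(ℕ, E)),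
      IsClosed (Set.range J) ∧ ∀ f, J f ≠ 0 → Supercyclic (J f) := by
  let J : ℓ¹(ℕ, 𝕜) →ₗᵢ[𝕜] (ℓ¹(ℕ, E) →L[𝕜] ℓ¹(ℕ, E)) :=
    { toLinearMap := shiftSeries 𝕜 E 1, norm_map' := norm_shiftSeries }
  refine ⟨J, J.isometry.isClosedEmbedding.isClosed_range, fun f hJf => ?_⟩
  exact supercyclic_shiftSeries ENNReal.one_ne_top ((map_ne_zero_iff J J.injective).1 hJf)

end ShiftSeries

/-- There is a linear isometry `J : ℓ¹ → L(ℓ¹)` with closed range such that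
every nonzero operator in the range of `J` is supercyclic.  In particular, the set of
supercyclic operators on `ℓ¹`, together with the null operator, contains an isometric copy
of `ℓ¹`. -/
theorem supercyclic_contains_isometric_copy_of_l1 {𝕜 : Type*} [RCLike 𝕜] :
    ∃ J : lp (fun _ : ℕ => 𝕜) 1 →ₗᵢ[𝕜]
        (lp (fun _ : ℕ => 𝕜) 1 →L[𝕜] lp (fun _ : ℕ => 𝕜) 1),
      IsClosed (Set.range J) ∧
      ∀ f : lp (fun _ : ℕ => 𝕜) 1, J f ≠ 0 → Supercyclic (J f) := by
  exact supercyclic_contains_isometric_copy_of_l1_general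
end

section
/- The linear map T : ℓ¹ → L(X) given by T(λ) = Σₖ₌₁^∞ λₖ·B_wᵏ is injective; that is, if λ ∈ ℓ¹ and Σₖ₌₁^∞ λₖ·B_wᵏ = 0 in L(X), then λ = 0. -/
open Filter Topology
open scoped ENNReal

/-!
Index the system from `0`. The power `B_wᵏ` sends `xₘ` to a nonzero multiple of `xₘ₋ₖ` if `k ≤ m`,
and to `0` otherwise. Hence the functional `x₀*` annihilates `B_wᵏ xₘ` unless `k = m`, and applying
`x₀*` to the value of `∑ λₖ B_wᵏ` at `xₘ` isolates the coefficient `λₘ`. Evaluating term by term is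
legitimate because the nuclear norm bound `‖B_w‖ ≤ ∑ wₙ ‖xₙ₊₁*‖ ‖xₙ‖ ≤ 1` makes the series converge
in operator norm.
-/

section Algebraic

variable {R X : Type*} [CommSemiring R] [AddCommMonoid X] [Module R X]

/-- `T` acts on the sequence `x` as the backward shift with weights `w`, as `B_w` does on a
biorthogonal system. Nothing is required of `T` outside the span of `x`. -/
structure IsWeightedBackwardShift (T : X →ₗ[R] X) (x : ℕ → X) (w : ℕ → R) : Prop where
  apply_zero : T (x 0) = 0
  apply_succ : ∀ n, T (x (n + 1)) = w n • x n

namespace IsWeightedBackwardShift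

variable {T : X →ₗ[R] X} {x : ℕ → X} {w : ℕ → R}

theorem pow_apply_add (hT : IsWeightedBackwardShift T x w) (k m : ℕ) :
    (T ^ k) (x (m + k)) = (∏ i ∈ Finset.range k, w (m + i)) • x m := by
  induction k generalizing m with
  | zero => simp
  | succ k ih =>
    calc (T ^ (k + 1)) (x (m + (k + 1)))
        = T ((T ^ k) (x (m + 1 + k))) := by
          rw [pow_succ', Module.End.mul_apply, Nat.add_right_comm, Nat.add_assoc]
      _ = (∏ i ∈ Finset.range k, w (m + 1 + i)) • w m • x m := by
          rw [ih, map_smul, hT.apply_succ]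
      _ = (∏ i ∈ Finset.range (k + 1), w (m + i)) • x m := by
          simp only [smul_smul, Finset.prod_range_succ', Nat.add_zero, Nat.add_assoc,
            Nat.add_comm 1]

theorem pow_apply_self (hT : IsWeightedBackwardShift T x w) (k : ℕ) :
    (T ^ k) (x k) = (∏ i ∈ Finset.range k, w i) • x 0 := by
  simpa only [Nat.zero_add] using hT.pow_apply_add k 0

theorem pow_apply_of_lt (hT : IsWeightedBackwardShift T x w) {k m : ℕ} (hmk : m < k) :
    (T ^ k) (x m) = 0 := by
  obtain ⟨j, rfl⟩ : ∃ j, k = j + 1 + m := ⟨k - (m + 1), by omega⟩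
  rw [pow_add, pow_succ, Module.End.mul_apply, Module.End.mul_apply, hT.pow_apply_self, map_smul,
    hT.apply_zero, smul_zero, map_zero]

theorem functional_pow_apply_of_ne (hT : IsWeightedBackwardShift T x w) {φ : X →ₗ[R] R}
    (hφ : ∀ n, n ≠ 0 → φ (x n) = 0) {k m : ℕ} (hkm : k ≠ m) : φ ((T ^ k) (x m)) = 0 := by
  rcases hkm.lt_or_gt with hlt | hgt
  · obtain ⟨j, rfl⟩ := Nat.exists_eq_add_of_lt hlt
    rw [show k + j + 1 = (j + 1) + k by omega, hT.pow_apply_add, map_smul, hφ _ j.succ_ne_zero,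
      smul_zero]
  · rw [hT.pow_apply_of_lt hgt, map_zero]

theorem functional_pow_apply_self_ne_zero [NoZeroDivisors R]
    (hT : IsWeightedBackwardShift T x w) (hw : ∀ n, w n ≠ 0) {φ : X →ₗ[R] R} (hφ₀ : φ (x 0) ≠ 0)
    (k : ℕ) : φ ((T ^ k) (x k)) ≠ 0 := by
  have : Nontrivial R := nontrivial_of_ne _ _ hφ₀
  rw [hT.pow_apply_self, map_smul, smul_eq_mul]
  exact mul_ne_zero (Finset.prod_ne_zero_iff.2 fun i _ => hw i) hφ₀

theorem eq_zero_of_hasSum_smul_pow [NoZeroDivisors R] [TopologicalSpace R] [T2Space R]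
    [TopologicalSpace X] (hT : IsWeightedBackwardShift T x w) (hw : ∀ n, w n ≠ 0)
    (φ : X →L[R] R) (hφ₀ : φ (x 0) ≠ 0) (hφ : ∀ n, n ≠ 0 → φ (x n) = 0) {a : ℕ → R}
    (ha : ∀ m, HasSum (fun k => a k • (T ^ (k + 1)) (x (m + 1))) 0) : a = 0 := by
  funext m
  have hsum : HasSum (fun k => a k * φ ((T ^ (k + 1)) (x (m + 1)))) 0 := by
    simpa only [map_smul, smul_eq_mul, map_zero] using φ.hasSum (ha m)
  have hsingle : HasSum (fun k => a k * φ ((T ^ (k + 1)) (x (m + 1))))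
      (a m * φ ((T ^ (m + 1)) (x (m + 1)))) :=
    hasSum_single m fun k hkm => mul_eq_zero_of_right _ <|
      hT.functional_pow_apply_of_ne (φ := φ) hφ (Nat.succ_injective.ne hkm)
  exact (mul_eq_zero.1 (hsingle.unique hsum)).resolve_right <|
    hT.functional_pow_apply_self_ne_zero hw (φ := φ) hφ₀ (m + 1)

theorem of_biorthogonal [TopologicalSpace X] {xs : ℕ → X →ₗ[R] R}
    (hbi : ∀ m n, xs m (x n) = if m = n then 1 else 0)
    (hT_tsum : ∀ z, T z = ∑' n, (w n * xs (n + 1) z) • x n) : IsWeightedBackwardShift T x w where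
  apply_zero := by simp [hT_tsum, hbi]
  apply_succ m := by
    rw [hT_tsum, tsum_eq_single m fun n hnm => by simp [hbi, hnm]]
    simp [hbi]

end IsWeightedBackwardShift

end Algebraic

section OperatorNorm

variable {ι 𝕜 E F : Type*} [NontriviallyNormedField 𝕜] [SeminormedAddCommGroup E] [NormedSpace 𝕜 E]
  [SeminormedAddCommGroup F] [NormedSpace 𝕜 F] {ξ : ι → E →L[𝕜] 𝕜} {y : ι → F} {A : E →L[𝕜] F}

theorem opNorm_le_tsum_of_eq_tsum_smul (hsum : Summable fun i => ‖ξ i‖ * ‖y i‖)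
    (hA : ∀ z, A z = ∑' i, ξ i z • y i) : ‖A‖ ≤ ∑' i, ‖ξ i‖ * ‖y i‖ := by
  refine A.opNorm_le_bound (tsum_nonneg fun i => by positivity) fun z => ?_
  rw [hA]
  refine tsum_of_norm_bounded (hsum.hasSum.mul_right ‖z‖) fun i => ?_
  calc ‖ξ i z • y i‖ = ‖ξ i z‖ * ‖y i‖ := norm_smul _ _
    _ ≤ ‖ξ i‖ * ‖z‖ * ‖y i‖ := by gcongr; exact (ξ i).le_opNorm z
    _ = ‖ξ i‖ * ‖y i‖ * ‖z‖ := mul_right_comm _ _ _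

theorem opNorm_le_tsum_norm_mul_of_eq_tsum_mul_smul {w : ι → 𝕜} {C : ℝ}
    (hw : Summable fun i => ‖w i‖) (hξ : ∀ i, ‖ξ i‖ ≤ C) (hy : ∀ i, ‖y i‖ ≤ 1)
    (hA : ∀ z, A z = ∑' i, (w i * ξ i z) • y i) : ‖A‖ ≤ (∑' i, ‖w i‖) * C := by
  have hterm (i : ι) : ‖w i • ξ i‖ * ‖y i‖ ≤ ‖w i‖ * C :=
    calc ‖w i • ξ i‖ * ‖y i‖ ≤ ‖w i • ξ i‖ := mul_le_of_le_one_right (norm_nonneg _) (hy i)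
      _ = ‖w i‖ * ‖ξ i‖ := norm_smul _ _
      _ ≤ ‖w i‖ * C := by gcongr; exact hξ i
  have hsum : Summable fun i => ‖w i • ξ i‖ * ‖y i‖ :=
    (hw.mul_right C).of_nonneg_of_le (fun i => by positivity) hterm
  calc ‖A‖ ≤ ∑' i, ‖w i • ξ i‖ * ‖y i‖ := opNorm_le_tsum_of_eq_tsum_smul hsum hA
    _ ≤ ∑' i, ‖w i‖ * C := hsum.tsum_le_tsum hterm (hw.mul_right C)
    _ = (∑' i, ‖w i‖) * C := tsum_mul_right

end OperatorNorm

theorem summable_smul_pow_succ_of_norm_le_one {𝕜 A : Type*} [SeminormedRing 𝕜] [SeminormedRing A]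
    [Module 𝕜 A] [IsBoundedSMul 𝕜 A] [CompleteSpace A] {a : ℕ → 𝕜} (ha : Summable fun k => ‖a k‖)
    {b : A} (hb : ‖b‖ ≤ 1) : Summable fun k => a k • b ^ (k + 1) := by
  refine ha.of_norm_bounded fun k => ?_
  have hpow : ‖b ^ (k + 1)‖ ≤ 1 :=
    (norm_pow_le' b k.succ_pos).trans (pow_le_one₀ (norm_nonneg b) hb)
  exact (norm_smul_le _ _).trans (mul_le_of_le_one_right (norm_nonneg _) hpow)

theorem sum_of_powers_injective_general {𝕜 X : Type*} [NontriviallyNormedField 𝕜]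
    [NormedAddCommGroup X] [NormedSpace 𝕜 X] [CompleteSpace X]
    (x : ℕ → X) (xs : ℕ → X →L[𝕜] 𝕜) (C : ℝ)
    (hx : ∀ n, ‖x n‖ ≤ 1) (hxs : ∀ n, ‖xs n‖ ≤ C)
    (hbi : ∀ m n, xs m (x n) = if m = n then 1 else 0)
    (w : ℕ → 𝕜) (hw : ∀ n, w n ≠ 0) (hw_sum : Summable fun n => ‖w n‖)
    (hw_le : ∑' n, ‖w n‖ ≤ C⁻¹) (B : X →L[𝕜] X)
    (hB : ∀ z, B z = ∑' n, (w n * xs (n + 1) z) • x n)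
    (f : lp (fun _ : ℕ => 𝕜) 1) (hf : ∑' k, f k • B ^ (k + 1) = 0) : f = 0 := by
  have hshift : IsWeightedBackwardShift (B : X →ₗ[𝕜] X) x w :=
    .of_biorthogonal (xs := fun n => xs n) hbi hB
  have hC : 0 ≤ C := (norm_nonneg _).trans (hxs 0)
  have hB_norm : ‖B‖ ≤ 1 :=
    calc ‖B‖ ≤ (∑' n, ‖w n‖) * C :=
          opNorm_le_tsum_norm_mul_of_eq_tsum_mul_smul hw_sum (fun n => hxs (n + 1)) hx hB
      _ ≤ C⁻¹ * C := by gcongr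
      _ ≤ 1 := inv_mul_le_one
  have hf_norm : Summable fun k => ‖f k‖ := by
    simpa using (lp.memℓp f).summable (by simp)
  have hseries : HasSum (fun k => f k • B ^ (k + 1)) 0 :=
    hf ▸ (summable_smul_pow_succ_of_norm_le_one hf_norm hB_norm).hasSum
  have hseries_apply (z : X) : HasSum (fun k => f k • ((B : X →ₗ[𝕜] X) ^ (k + 1)) z) 0 := by
    simpa [← ContinuousLinearMap.toLinearMap_pow] using
      (ContinuousLinearMap.apply 𝕜 X z).hasSum hseries
  exact lp.ext <| hshift.eq_zero_of_hasSum_smul_pow hw (xs 0) (by simp [hbi])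
    (fun n hn => by simp [hbi, hn.symm]) fun m => hseries_apply (x (m + 1))

/-- (Indices are 0-based: the coefficient `f k` of `f ∈ ℓ¹` multiplies
`B_w^{k+1}`, matching the paper's `λ_k B_w^k` for `k ≥ 1`.)  The linear map
`T : ℓ¹ → L(X)`, `T f = Σₖ f k • B_w^{k+1}`, is injective: if the sum vanishes then
`f = 0`. -/
theorem sum_of_powers_injective
    {𝕜 : Type*} [RCLike 𝕜] {X : Type*} [NormedAddCommGroup X] [NormedSpace 𝕜 X]
    [CompleteSpace X]
    (x : ℕ → X) (xs : ℕ → X →L[𝕜] 𝕜) (C : ℝ)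
    (hx : ∀ n, ‖x n‖ = 1)
    (hxs : ∀ n, ‖xs n‖ ≤ C)
    (hbi : ∀ m n, xs m (x n) = if m = n then 1 else 0)
    (hdense : Dense (Submodule.span 𝕜 (Set.range x) : Set X))
    (hsep : ∀ z : X, (∀ n, xs n z = 0) → z = 0)
    (w : ℕ → ℝ)
    (hw_pos : ∀ n, 0 < w n)
    (hw_anti : StrictAnti w)
    (hw_lim : Tendsto w atTop (nhds 0))
    (hw_sum : Summable w)
    (hw_le : ∑' n, w n ≤ C⁻¹)
    (B : X →L[𝕜] X)
    (hB : ∀ z : X, B z = ∑' n : ℕ, ((w n : 𝕜) * xs (n + 1) z) • x n)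
    (f : lp (fun _ : ℕ => 𝕜) 1)
    (hf : (∑' k : ℕ, (f k : 𝕜) • B ^ (k + 1)) = 0) :
    f = 0 := by
  have hw_norm (n : ℕ) : ‖(w n : 𝕜)‖ = w n := RCLike.norm_of_nonneg (hw_pos n).le
  exact sum_of_powers_injective_general x xs C (fun n => (hx n).le) hxs hbi (fun n => (w n : 𝕜))
    (fun n => mod_cast (hw_pos n).ne') (by simpa only [hw_norm]) (by simpa only [hw_norm]) B hB f hf
end

section
/- Suppose (λ^m)ₘ ⊆ ℓ¹, U ∈ L(X), and ‖T_{λ^m} − U‖ → 0 as m → ∞. Then for all natural numbers ℓ, k with 1 ≤ ℓ ≤ k: lim_{m→∞} λ_{k−ℓ+1}^m = x_ℓ*(U(x_{k+1})) · Π_{i=ℓ}^{k} wᵢ⁻¹; and for all ℓ > k: x_ℓ*(U(x_{k+1})) = 0. -/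
/-!
On coordinates, `B_w ^ j` multiplies by a product of `j` consecutive weights and shifts by `j`. So
at most one power of `B_w` contributes to the matrix entry `x_ℓ*(T_λ x_n)`: the entry is a nonzero
multiple of `λ_{n-ℓ}` if `ℓ < n`, and zero otherwise. Matrix entries pass to weak operator limits.
The series `T_λ` converges because `B_w` is power bounded: a product of distinct weights is at most
`exp (∑ ‖w_n‖)` in norm, so the coordinates of all `B_w ^ j z` are bounded by a multiple of `‖z‖`.
-/

open Filter Topology
open scoped ENNReal

theorem prod_norm_le_exp_tsum_norm {ι E : Type*} [SeminormedAddGroup E] {f : ι → E}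
    (hf : Summable fun i => ‖f i‖) (s : Finset ι) :
    ∏ i ∈ s, ‖f i‖ ≤ Real.exp (∑' i, ‖f i‖) :=
  calc ∏ i ∈ s, ‖f i‖
      ≤ ∏ i ∈ s, (1 + ‖f i‖) :=
        Finset.prod_le_prod (fun _ _ => norm_nonneg _) fun _ _ => le_add_of_nonneg_left zero_le_one
    _ ≤ Real.exp (∑ i ∈ s, ‖f i‖) := Real.prod_one_add_le_exp_sum s fun _ => norm_nonneg _
    _ ≤ Real.exp (∑' i, ‖f i‖) :=
        Real.exp_le_exp.2 (hf.sum_le_tsum s fun _ _ => norm_nonneg _)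

section Coordinates

variable {𝕜 X : Type*} [CommRing 𝕜] [TopologicalSpace 𝕜] [AddCommGroup X] [TopologicalSpace X]
  [Module 𝕜 X]

/-- `B` is the weighted backward shift of the system `(x, xs)` with weights `w`, sending `x (n + 1)`
to `w n • x n` when the system is biorthogonal. Convergence of the defining series is included. -/
def IsWeightedBackwardShift_s12 (x : ℕ → X) (xs : ℕ → X →L[𝕜] 𝕜) (w : ℕ → 𝕜) (B : X →L[𝕜] X) : Prop :=
  ∀ z, HasSum (fun n => (w n * xs (n + 1) z) • x n) (B z)

namespace IsWeightedBackwardShift_s12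

variable [T2Space 𝕜] {x : ℕ → X} {xs : ℕ → X →L[𝕜] 𝕜} {w : ℕ → 𝕜} {B : X →L[𝕜] X}

theorem coord_apply (hB : IsWeightedBackwardShift_s12 x xs w B)
    (hbi : ∀ m n, xs m (x n) = if m = n then 1 else 0) (l : ℕ) (z : X) :
    xs l (B z) = w l * xs (l + 1) z := by
  refine (((hB z).mapL (xs l)).unique (hasSum_single l fun n hn => ?_)).trans ?_
  · simp [hbi, hn.symm]
  · simp [hbi]

theorem coord_pow_apply (hB : IsWeightedBackwardShift_s12 x xs w B)
    (hbi : ∀ m n, xs m (x n) = if m = n then 1 else 0) (j l : ℕ) (z : X) :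
    xs l ((B ^ j) z) = (∏ i ∈ Finset.Ico l (l + j), w i) * xs (l + j) z := by
  induction j generalizing z with
  | zero => simp
  | succ j ih =>
    calc xs l ((B ^ (j + 1)) z)
        = (∏ i ∈ Finset.Ico l (l + j), w i) * xs (l + j) (B z) := by
          rw [pow_succ, mul_apply_eq_comp, ih]
      _ = (∏ i ∈ Finset.Ico l (l + j), w i) * w (l + j) * xs (l + j + 1) z := by
          rw [hB.coord_apply hbi, mul_assoc]
      _ = (∏ i ∈ Finset.Ico l (l + (j + 1)), w i) * xs (l + (j + 1)) z := by
          rw [← add_assoc, Finset.prod_Ico_succ_top (Nat.le_add_right l j)]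

theorem coord_pow_succ_basis (hB : IsWeightedBackwardShift_s12 x xs w B)
    (hbi : ∀ m n, xs m (x n) = if m = n then 1 else 0) (j l n : ℕ) :
    xs l ((B ^ (j + 1)) (x n)) = if l + j + 1 = n then ∏ i ∈ Finset.Icc l (l + j), w i else 0 := by
  rw [hB.coord_pow_apply hbi, hbi, mul_ite, mul_one, mul_zero, ← add_assoc,
    Finset.Ico_add_one_right_eq_Icc]

theorem hasSum_coord (hB : IsWeightedBackwardShift_s12 x xs w B)
    (hbi : ∀ m n, xs m (x n) = if m = n then 1 else 0) {a : ℕ → 𝕜} {n : ℕ} {y : X}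
    (hy : HasSum (fun i => a i • (B ^ (i + 1)) (x n)) y) (l : ℕ) :
    HasSum (fun j => a j * if l + j + 1 = n then ∏ i ∈ Finset.Icc l (l + j), w i else 0)
      (xs l y) := by
  simpa only [map_smul, smul_eq_mul, hB.coord_pow_succ_basis hbi] using hy.mapL (xs l)

theorem coord_of_hasSum (hB : IsWeightedBackwardShift_s12 x xs w B)
    (hbi : ∀ m n, xs m (x n) = if m = n then 1 else 0) {a : ℕ → 𝕜} {l j : ℕ} {y : X}
    (hy : HasSum (fun i => a i • (B ^ (i + 1)) (x (l + j + 1))) y) :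
    xs l y = a j * ∏ i ∈ Finset.Icc l (l + j), w i := by
  refine ((hB.hasSum_coord hbi hy l).unique (hasSum_single j fun i hi => ?_)).trans ?_
  · simp [hi]
  · simp

theorem coord_eq_zero_of_hasSum (hB : IsWeightedBackwardShift_s12 x xs w B)
    (hbi : ∀ m n, xs m (x n) = if m = n then 1 else 0) {a : ℕ → 𝕜} {l n : ℕ} (hnl : n ≤ l) {y : X}
    (hy : HasSum (fun i => a i • (B ^ (i + 1)) (x n)) y) : xs l y = 0 := by
  refine (hB.hasSum_coord hbi hy l).unique (hasSum_zero.congr_fun fun j => ?_)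
  rw [if_neg (by omega), mul_zero]

end IsWeightedBackwardShift_s12

end Coordinates

section Normed

variable {𝕜 X : Type*} [NontriviallyNormedField 𝕜] [NormedAddCommGroup X] [NormedSpace 𝕜 X]
  {x : ℕ → X} {xs : ℕ → X →L[𝕜] 𝕜} {w : ℕ → 𝕜} {B : X →L[𝕜] X} {C M : ℝ}

theorem norm_mul_smul_le_of_norm_le {b c : 𝕜} {v : X} {K : ℝ} (hc : ‖c‖ ≤ K) (hv : ‖v‖ ≤ M) :
    ‖(b * c) • v‖ ≤ ‖b‖ * (K * M) := by
  have hK : 0 ≤ K := (norm_nonneg c).trans hc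
  rw [norm_smul, norm_mul, mul_assoc]
  gcongr

theorem isWeightedBackwardShift_of_eq_tsum [CompleteSpace X] (hx : ∀ n, ‖x n‖ ≤ M)
    (hxs : ∀ n, ‖xs n‖ ≤ C) (hw : Summable fun n => ‖w n‖)
    (hB : ∀ z, B z = ∑' n, (w n * xs (n + 1) z) • x n) : IsWeightedBackwardShift_s12 x xs w B := by
  intro z
  have hsum : Summable fun n => (w n * xs (n + 1) z) • x n :=
    .of_norm_bounded (hw.mul_right (C * ‖z‖ * M)) fun n =>
      norm_mul_smul_le_of_norm_le ((xs (n + 1)).le_of_opNorm_le (hxs _) z) (hx n)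
  simpa only [hB z] using hsum.hasSum

namespace IsWeightedBackwardShift_s12

theorem norm_apply_le (hB : IsWeightedBackwardShift_s12 x xs w B) (hx : ∀ n, ‖x n‖ ≤ M)
    (hw : Summable fun n => ‖w n‖) {K : ℝ} {z : X} (hz : ∀ n, ‖xs n z‖ ≤ K) :
    ‖B z‖ ≤ (∑' n, ‖w n‖) * (K * M) :=
  (hB z).norm_le_of_bounded (hw.hasSum.mul_right (K * M)) fun n =>
    norm_mul_smul_le_of_norm_le (hz (n + 1)) (hx n)

theorem norm_coord_pow_le (hB : IsWeightedBackwardShift_s12 x xs w B)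
    (hbi : ∀ m n, xs m (x n) = if m = n then 1 else 0) (hxs : ∀ n, ‖xs n‖ ≤ C)
    (hw : Summable fun n => ‖w n‖) (j l : ℕ) (z : X) :
    ‖xs l ((B ^ j) z)‖ ≤ Real.exp (∑' n, ‖w n‖) * (C * ‖z‖) := by
  rw [hB.coord_pow_apply hbi, norm_mul, norm_prod]
  gcongr
  · exact prod_norm_le_exp_tsum_norm hw _
  · exact (xs (l + j)).le_of_opNorm_le (hxs _) z

theorem norm_pow_succ_le (hB : IsWeightedBackwardShift_s12 x xs w B)
    (hbi : ∀ m n, xs m (x n) = if m = n then 1 else 0) (hx : ∀ n, ‖x n‖ ≤ M)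
    (hxs : ∀ n, ‖xs n‖ ≤ C) (hw : Summable fun n => ‖w n‖) (j : ℕ) :
    ‖B ^ (j + 1)‖ ≤ (∑' n, ‖w n‖) * (Real.exp (∑' n, ‖w n‖) * C * M) := by
  have hM : 0 ≤ M := (norm_nonneg _).trans (hx 0)
  have hC : 0 ≤ C := (norm_nonneg _).trans (hxs 0)
  refine (B ^ (j + 1)).opNorm_le_bound (by positivity) fun z => ?_
  calc ‖(B ^ (j + 1)) z‖
      = ‖B ((B ^ j) z)‖ := by rw [pow_succ', mul_apply_eq_comp]
    _ ≤ (∑' n, ‖w n‖) * (Real.exp (∑' n, ‖w n‖) * (C * ‖z‖) * M) :=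
        hB.norm_apply_le hx hw fun l => hB.norm_coord_pow_le hbi hxs hw j l z
    _ = (∑' n, ‖w n‖) * (Real.exp (∑' n, ‖w n‖) * C * M) * ‖z‖ := by ring

end IsWeightedBackwardShift_s12

/-- The operator `T_a` attached to the coefficients `a`: the power series in `B` without constant
term in which `a k` multiplies `B ^ (k + 1)`, and `0` if that series does not converge in norm. -/
noncomputable def powerSeriesOperator (B : X →L[𝕜] X) (a : ℕ → 𝕜) : X →L[𝕜] X :=
  ∑' k, a k • B ^ (k + 1)

theorem hasSum_powerSeriesOperator_apply [CompleteSpace X] {K : ℝ}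
    (hK : ∀ j, ‖B ^ (j + 1)‖ ≤ K) {a : ℕ → 𝕜} (ha : Summable fun k => ‖a k‖) (z : X) :
    HasSum (fun k => a k • (B ^ (k + 1)) z) (powerSeriesOperator B a z) := by
  have hsum : Summable fun k => a k • B ^ (k + 1) :=
    .of_norm_bounded (ha.mul_right K) fun k => by
      rw [norm_smul]
      gcongr
      exact hK k
  exact hsum.hasSum.mapL (ContinuousLinearMap.apply 𝕜 X z)

theorem limit_coefficients_formula_general [CompleteSpace X]
    (hx : ∀ n, ‖x n‖ ≤ M) (hxs : ∀ n, ‖xs n‖ ≤ C)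
    (hbi : ∀ m n, xs m (x n) = if m = n then 1 else 0)
    (hw_ne : ∀ n, w n ≠ 0) (hw : Summable fun n => ‖w n‖)
    (hB : ∀ z, B z = ∑' n, (w n * xs (n + 1) z) • x n)
    {ι : Type*} {F : Filter ι} [F.NeBot] {lam : ι → lp (fun _ : ℕ => 𝕜) 1} {U : X →L[𝕜] X}
    (hconv : ∀ (z : X) (f : StrongDual 𝕜 X),
      Tendsto (fun m => f (powerSeriesOperator B (lam m) z)) F (𝓝 (f (U z)))) :
    (∀ l k : ℕ, l ≤ k →
      Tendsto (fun m => lam m (k - l)) F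
        (𝓝 (xs l (U (x (k + 1))) * ∏ i ∈ Finset.Icc l k, (w i)⁻¹))) ∧
    ∀ l k : ℕ, k < l → xs l (U (x (k + 1))) = 0 := by
  have hshift := isWeightedBackwardShift_of_eq_tsum hx hxs hw hB
  have hT (m : ι) (z : X) :
      HasSum (fun k => lam m k • (B ^ (k + 1)) z) (powerSeriesOperator B (lam m) z) :=
    hasSum_powerSeriesOperator_apply (hshift.norm_pow_succ_le hbi hx hxs hw)
      (by simpa using (lp.memℓp (lam m)).summable (by simp)) z
  refine ⟨fun l k hlk => ?_, fun l k hkl => ?_⟩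
  · obtain ⟨j, rfl⟩ := Nat.exists_eq_add_of_le hlk
    have hprod : ∏ i ∈ Finset.Icc l (l + j), w i ≠ 0 := Finset.prod_ne_zero_iff.2 fun i _ => hw_ne i
    refine ((hconv (x (l + j + 1)) (xs l)).mul_const _).congr fun m => ?_
    rw [hshift.coord_of_hasSum hbi (hT m _), Finset.prod_inv_distrib,
      mul_inv_cancel_right₀ hprod, Nat.add_sub_cancel_left]
  · refine tendsto_nhds_unique (hconv (x (k + 1)) (xs l)) (tendsto_const_nhds.congr fun m => ?_)
    rw [hshift.coord_eq_zero_of_hasSum hbi hkl (hT m _)]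

end Normed

/-- (Indices are 0-based: `x n`, `xs n`, `w n` are the paper's `x_{n+1}`,
`x*_{n+1}`, `w_{n+1}`, and `lam m k` multiplies `B_w^{k+1}`.  The paper's claim for
`1 ≤ ℓ ≤ k` becomes `ℓ ≤ k` here: `limₘ lam m (k - ℓ) = xs ℓ (U (x (k+1))) · Π_{i=ℓ}^{k} (w i)⁻¹`,
and for `ℓ > k`: `xs ℓ (U (x (k+1))) = 0`.)  Suppose `‖T_{lam m} − U‖ → 0`. -/
theorem limit_coefficients_formula
    {𝕜 : Type*} [RCLike 𝕜] {X : Type*} [NormedAddCommGroup X] [NormedSpace 𝕜 X]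
    [CompleteSpace X]
    (x : ℕ → X) (xs : ℕ → X →L[𝕜] 𝕜) (C : ℝ)
    (hx : ∀ n, ‖x n‖ = 1)
    (hxs : ∀ n, ‖xs n‖ ≤ C)
    (hbi : ∀ m n, xs m (x n) = if m = n then 1 else 0)
    (hdense : Dense (Submodule.span 𝕜 (Set.range x) : Set X))
    (hsep : ∀ z : X, (∀ n, xs n z = 0) → z = 0)
    (w : ℕ → ℝ)
    (hw_pos : ∀ n, 0 < w n)
    (hw_anti : StrictAnti w)
    (hw_lim : Tendsto w atTop (nhds 0))
    (hw_sum : Summable w)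
    (hw_le : ∑' n, w n ≤ C⁻¹)
    (B : X →L[𝕜] X)
    (hB : ∀ z : X, B z = ∑' n : ℕ, ((w n : 𝕜) * xs (n + 1) z) • x n)
    (lam : ℕ → lp (fun _ : ℕ => 𝕜) 1)
    (U : X →L[𝕜] X)
    (hconv : Tendsto
      (fun m => ‖(∑' k : ℕ, (lam m k : 𝕜) • B ^ (k + 1)) - U‖) atTop (nhds 0)) :
    (∀ ℓ k : ℕ, ℓ ≤ k →
      Tendsto (fun m => (lam m (k - ℓ) : 𝕜)) atTop
        (nhds (xs ℓ (U (x (k + 1))) * ∏ i ∈ Finset.Icc ℓ k, ((w i : 𝕜))⁻¹))) ∧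
    ∀ ℓ k : ℕ, k < ℓ → xs ℓ (U (x (k + 1))) = 0 := by
  exact limit_coefficients_formula_general (fun n => (hx n).le) hxs hbi
    (fun n => RCLike.ofReal_ne_zero.2 (hw_pos n).ne') (by simpa using hw_sum.norm) hB fun z f =>
      ((f.comp (ContinuousLinearMap.apply 𝕜 X z)).continuous.tendsto U).comp
        (tendsto_iff_norm_sub_tendsto_zero.2 hconv)
end

section
/- The continuous linear operator A : ℓ¹ → ℓ¹ defined by A((λ₁, λ₂, λ₃, λ₄, …)) = (0, λ₃, λ₄, λ₅, …) is not supercyclic: for no x ∈ ℓ¹ is the set {c·Aᵏ(x) : c ∈ 𝕂, k ≥ 0} dense in ℓ¹. -/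
open Filter Topology
open scoped ENNReal

/-!
Every vector `c • Uᵏ y` of a projective orbit lies in the line through `y` (if `k = 0`) or in the
range of `U` (if `k ≥ 1`). If the orbit is dense, the whole space is therefore the union of the
closed subspaces `span {y}` and `closure (range U)`. A vector space is never the union of two proper
subspaces, so in dimension at least two a supercyclic operator has dense range. The operator on
`ℓ¹` does not: the zeroth coordinate vanishes on its range.
-/

section Supercyclic

variable {R E : Type*} [Semiring R] [AddCommMonoid E] [Module R E] [TopologicalSpace E]

/-- The projective orbit `{c • Uᵏ y : c ∈ R, k ≥ 0}` of a vector `y` under an operator `U`, whose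
density defines supercyclicity. -/
def projectiveOrbit (U : E →L[R] E) (y : E) : Set E :=
  {z | ∃ (c : R) (k : ℕ), z = c • (U ^ k) y}

/-- An operator is supercyclic if some vector has a dense projective orbit. -/
def IsSupercyclic (U : E →L[R] E) : Prop :=
  ∃ y, Dense (projectiveOrbit U y)

theorem projectiveOrbit_subset_span_union_range (U : E →L[R] E) (y : E) :
    projectiveOrbit U y ⊆ (R ∙ y) ∪ U.range := by
  rintro _ ⟨c, _ | k, rfl⟩
  · exact .inl (Submodule.smul_mem _ c (Submodule.mem_span_singleton_self y))
  · rw [pow_succ']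
    exact .inr (Submodule.smul_mem _ c ⟨(U ^ k) y, rfl⟩)

end Supercyclic

theorem shifted_backward_shift_not_supercyclic_general {𝕜 E : Type*} [NontriviallyNormedField 𝕜]
    [CompleteSpace 𝕜] [AddCommGroup E] [Module 𝕜 E] [TopologicalSpace E] [IsTopologicalAddGroup E]
    [ContinuousSMul 𝕜 E] [T2Space E] (U : E →L[𝕜] E) (hE : 1 < Module.rank 𝕜 E)
    (hU : ¬ DenseRange U) : ¬ IsSupercyclic U := by
  rintro ⟨y, hy⟩
  have hclosed : IsClosed ((𝕜 ∙ y : Set E) ∪ U.range.topologicalClosure) :=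
    (Submodule.closed_of_finiteDimensional _).union U.range.isClosed_topologicalClosure
  have hsub : projectiveOrbit U y ⊆ (𝕜 ∙ y) ∪ U.range.topologicalClosure :=
    (projectiveOrbit_subset_span_union_range U y).trans
      (Set.union_subset_union_right _ U.range.le_topologicalClosure)
  have hcover : ((⊤ : Submodule 𝕜 E) : Set E) ⊆ (𝕜 ∙ y) ∪ U.range.topologicalClosure :=
    fun z _ => hclosed.closure_subset_iff.2 hsub (hy z)
  rcases AddSubgroupClass.subset_union.1 hcover with hspan | hrange
  · exact hE.not_ge (rank_le_one_iff.2
      ⟨y, fun _ => Submodule.mem_span_singleton.1 (hspan Submodule.mem_top)⟩)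
  · exact hU fun _ => hrange Submodule.mem_top

section LpSpace

theorem not_denseRange_of_lp_apply_eq_zero {X α : Type*} {E : α → Type*}
    [∀ i, NormedAddCommGroup (E i)] {p : ℝ≥0∞} [Fact (1 ≤ p)] {i : α} [Nontrivial (E i)]
    {f : X → lp E p} (hf : ∀ x, f x i = 0) : ¬ DenseRange f := by
  classical
  intro hdense
  obtain ⟨a, ha⟩ := exists_ne (0 : E i)
  have hcont : Continuous fun g : lp E p => g i :=
    (continuous_apply i).comp lp.uniformContinuous_coe.continuous
  have hzero : (fun g : lp E p => g i) = fun _ => 0 :=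
    hdense.equalizer hcont continuous_const (funext hf)
  exact ha (by simpa using congrFun hzero (lp.single p i a))

variable (R : Type*) [NormedRing R] {α : Type*} (p : ℝ≥0∞)

theorem linearIndependent_lp_single [DecidableEq α] :
    LinearIndependent R fun i : α => (lp.single p i 1 : lp (fun _ : α => R) p) :=
  .of_comp (lpSubmodule R (fun _ : α => R) p).subtype (Pi.linearIndependent_single_one α R)

theorem one_lt_rank_lp [Nontrivial R] [Nontrivial α] :
    1 < Module.rank R (lp (fun _ : α => R) p) := by
  classical
  have hα : 1 < Cardinal.lift (Cardinal.mk α) :=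
    Cardinal.one_lt_lift_iff.2 (Cardinal.one_lt_iff_nontrivial.2 inferInstance)
  exact Cardinal.one_lt_lift_iff.1
    (hα.trans_le (linearIndependent_lp_single R p).cardinal_lift_le_rank)

end LpSpace

/-- (Coordinates are 0-based: the paper's operator
`(λ₁, λ₂, λ₃, λ₄, …) ↦ (0, λ₃, λ₄, λ₅, …)` satisfies `(A f) 0 = 0` and
`(A f) n = f (n + 1)` for `n ≥ 1`.)  This operator `A ∈ L(ℓ¹)` is not supercyclic:
for no `y ∈ ℓ¹` is the set `{c • Aᵏ y : c ∈ 𝕜, k ≥ 0}` dense in `ℓ¹`. -/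
theorem shifted_backward_shift_not_supercyclic {𝕜 : Type*} [RCLike 𝕜]
    (A : lp (fun _ : ℕ => 𝕜) 1 →L[𝕜] lp (fun _ : ℕ => 𝕜) 1)
    (hA0 : ∀ f : lp (fun _ : ℕ => 𝕜) 1, A f 0 = 0)
    (hA : ∀ f : lp (fun _ : ℕ => 𝕜) 1, ∀ n : ℕ, 1 ≤ n → A f n = f (n + 1)) :
    ¬ ∃ y : lp (fun _ : ℕ => 𝕜) 1,
        Dense {z : lp (fun _ : ℕ => 𝕜) 1 | ∃ (c : 𝕜) (k : ℕ), z = c • (A ^ k) y} := by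
  exact shifted_backward_shift_not_supercyclic_general A (one_lt_rank_lp 𝕜 1)
    (not_denseRange_of_lp_apply_eq_zero hA0)
end
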